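/- Let α be an irrational real number and let (m_k) be given by the Master recursion, with m(x) = Σ_{k≥1} m_k x^k of radius of convergence R > 0. Then the series converges at the radius of convergence: Σ_{k≥1} m_k R^k < ∞, and consequently m extends to a continuous function on the closed disk {x ∈ ℂ : |x| ≤ R}, holomorphic in the interior. -/

import Mathlib

/-- `D α k = 2(1 - cos(2πkα))`, the small denominator of the Master recursion. -/
noncomputable def D (α : ℝ) (k : ℕ) : ℝ := 2 * (1 - Real.cos (2 * Real.pi * k * α))

open Finset Filter Topology

theorem D_pos {α : ℝ} (hα : Irrational α) {k : ℕ} (hk : k ≠ 0) : 0 < D α k := by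
  have hne : Real.cos (2 * Real.pi * k * α) ≠ 1 := by
    intro h
    obtain ⟨n, hn⟩ := (Real.cos_eq_one_iff _).1 h
    have h2 : (k : ℝ) * α = n := by
      have : (2 * Real.pi) * (k * α) = (2 * Real.pi) * n := by linarith
      exact mul_left_cancel₀ (by positivity) this
    exact (hα.natCast_mul hk).ne_int n h2
  have := lt_of_le_of_ne (Real.cos_le_one _) hne
  unfold D
  linarith

theorem D_le_four (α : ℝ) (k : ℕ) : D α k ≤ 4 := by
  have := Real.neg_one_le_cos (2 * Real.pi * k * α)
  unfold D
  linarith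

theorem master_F_nonneg {α : ℝ} {m F : ℕ → ℝ} (hα : Irrational α) (hF0 : F 0 = 1)
    (hm : ∀ k : ℕ, m (k + 1) = F k / D α (k + 1))
    (hF : ∀ k : ℕ, 1 ≤ k →
      (k : ℝ) * F k = ∑ j ∈ Finset.Icc 1 k, (j : ℝ) * m j * F (k - j)) (k : ℕ) :
    0 ≤ F k := by
  induction k using Nat.strong_induction_on with
  | _ k ih =>
    rcases Nat.eq_zero_or_pos k with rfl | hk
    · rw [hF0]; exact zero_le_one
    · refine nonneg_of_mul_nonneg_right (a := (k : ℝ)) ?_ (by exact_mod_cast hk)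
      rw [hF k hk]
      refine sum_nonneg fun j hj => ?_
      obtain ⟨h1, h2⟩ := mem_Icc.1 hj
      obtain ⟨i, rfl⟩ : ∃ i, j = i + 1 := ⟨j - 1, by omega⟩
      have hmj : 0 ≤ m (i + 1) := by
        rw [hm]
        exact div_nonneg (ih i (by omega)) (D_pos hα i.succ_ne_zero).le
      exact mul_nonneg (mul_nonneg (Nat.cast_nonneg _) hmj) (ih _ (by omega))

/-- If `k F_k = ∑ j m_j F_{k-j}` with nonnegative terms, i.e. `F = exp m` formally, then
`F` dominates `m ^ 2 / 2` coefficientwise. -/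
theorem sum_antidiagonal_mul_self_le {m F : ℕ → ℝ} (hm0 : m 0 = 0) (hF0 : F 0 = 1)
    (hmn : ∀ k, 0 ≤ m k) (hFn : ∀ k, 0 ≤ F k)
    (hF : ∀ k : ℕ, 1 ≤ k →
      (k : ℝ) * F k = ∑ j ∈ Finset.Icc 1 k, (j : ℝ) * m j * F (k - j)) (k : ℕ) :
    ∑ p ∈ antidiagonal k, m p.1 * m p.2 ≤ 2 * F k := by
  have hmF : ∀ k, m k ≤ F k := by
    intro k
    rcases Nat.eq_zero_or_pos k with rfl | hk
    · rw [hm0]; exact hFn 0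
    · have hk' : (0 : ℝ) < k := by exact_mod_cast hk
      refine le_of_mul_le_mul_left ?_ hk'
      rw [hF k hk]
      have := single_le_sum (f := fun j : ℕ => (j : ℝ) * m j * F (k - j))
        (fun j _ => mul_nonneg (mul_nonneg (Nat.cast_nonneg _) (hmn j)) (hFn _))
        (right_mem_Icc.2 hk)
      simpa [hF0] using this
  rcases Nat.eq_zero_or_pos k with rfl | hk
  · simp [hm0, hFn 0]
  have hk' : (0 : ℝ) < k := by exact_mod_cast hk
  have hle : ∑ p ∈ antidiagonal k, (p.1 : ℝ) * m p.1 * m p.2 ≤ k * F k := by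
    rw [hF k hk, Nat.sum_antidiagonal_eq_sum_range_succ (fun i j => (i : ℝ) * m i * m j),
      range_eq_Ico, sum_eq_sum_Ico_succ_bot k.succ_pos]
    simp only [Nat.cast_zero, zero_mul, zero_add]
    refine sum_le_sum fun j _ => ?_
    exact mul_le_mul_of_nonneg_left (hmF _) (mul_nonneg (Nat.cast_nonneg _) (hmn j))
  have hswap : ∑ p ∈ antidiagonal k, (p.2 : ℝ) * m p.1 * m p.2
      = ∑ p ∈ antidiagonal k, (p.1 : ℝ) * m p.1 * m p.2 := by
    rw [← Nat.sum_antidiagonal_swap]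
    exact sum_congr rfl fun p _ => by simp only [Prod.fst_swap, Prod.snd_swap]; ring
  have hsum : (k : ℝ) * ∑ p ∈ antidiagonal k, m p.1 * m p.2
      = ∑ p ∈ antidiagonal k, (p.1 : ℝ) * m p.1 * m p.2
        + ∑ p ∈ antidiagonal k, (p.2 : ℝ) * m p.1 * m p.2 := by
    rw [mul_sum, ← sum_add_distrib]
    refine sum_congr rfl fun p hp => ?_
    rw [← mem_antidiagonal.1 hp]
    push_cast
    ring
  refine le_of_mul_le_mul_left ?_ hk'
  linarith

/-- A power series with nonnegative coefficients satisfying `c x m(x)² ≤ m(x)` coefficientwise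
is bounded by `1 / (c r)` wherever it converges. -/
theorem tsum_le_of_sum_antidiagonal_le {m : ℕ → ℝ} {c r : ℝ} (hc : 0 < c) (hr : 0 < r)
    (hmn : ∀ k, 0 ≤ m k)
    (hm : ∀ k, c * ∑ p ∈ antidiagonal k, m p.1 * m p.2 ≤ m (k + 1))
    (hs : Summable fun k => m k * r ^ k) :
    ∑' k, m k * r ^ k ≤ 1 / (c * r) := by
  have hn : ∀ k, 0 ≤ m k * r ^ k := fun k => mul_nonneg (hmn k) (by positivity)
  set S := ∑' k, m k * r ^ k with hS
  have hsn : Summable fun k => ‖m k * r ^ k‖ := hs.norm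
  have hprod := tsum_mul_tsum_eq_tsum_sum_antidiagonal_of_summable_norm hsn hsn
  have hsp := (summable_norm_sum_mul_antidiagonal_of_summable_norm hsn hsn).of_norm
  have hquad : c * r * (S * S) ≤ S := by
    rw [hS, hprod, ← tsum_mul_left]
    calc _ ≤ ∑' k, m (k + 1) * r ^ (k + 1) := by
          refine (hsp.mul_left _).tsum_le_tsum (fun k => ?_) ((summable_nat_add_iff 1).2 hs)
          have : ∑ p ∈ antidiagonal k, m p.1 * r ^ p.1 * (m p.2 * r ^ p.2)
              = r ^ k * ∑ p ∈ antidiagonal k, m p.1 * m p.2 := by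
            rw [mul_sum]
            refine sum_congr rfl fun p hp => ?_
            rw [← mem_antidiagonal.1 hp]
            ring
          rw [this]
          calc _ = (c * ∑ p ∈ antidiagonal k, m p.1 * m p.2) * r ^ (k + 1) := by ring
            _ ≤ _ := mul_le_mul_of_nonneg_right (hm k) (by positivity)
      _ ≤ _ := by
          rw [hs.tsum_eq_zero_add]
          exact le_add_of_nonneg_left (hn 0)
  rw [le_div_iff₀ (by positivity)]
  by_contra! h
  have hSpos : 0 < S := by
    by_contra! h0
    nlinarith [mul_pos hc hr]
  nlinarith

/-- if `R > 0` is the radius of convergence of `m(x) = Σ m_k x^k`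
(convergence for `‖x‖ < R`, divergence for `r > R`), then the series converges at
the radius of convergence, `Σ m_k R^k < ∞`, and hence `m` extends continuously to
the closed disk `{|x| ≤ R}`, holomorphically in the interior. -/
theorem stmt4 (α : ℝ) (hα : Irrational α) (m F : ℕ → ℝ)
    (hm0 : m 0 = 0) (hF0 : F 0 = 1)
    (hm : ∀ k : ℕ, m (k + 1) = F k / D α (k + 1))
    (hF : ∀ k : ℕ, 1 ≤ k →
      (k : ℝ) * F k = ∑ j ∈ Finset.Icc 1 k, (j : ℝ) * m j * F (k - j))
    (R : ℝ) (hR : 0 < R)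
    (hconv : ∀ x : ℂ, ‖x‖ < R → Summable fun k : ℕ => (m k : ℂ) * x ^ k)
    (hdiv : ∀ r : ℝ, R < r → ¬ Summable fun k : ℕ => m k * r ^ k) :
    (Summable fun k : ℕ => m k * R ^ k) ∧
    ContinuousOn (fun x : ℂ => ∑' k : ℕ, (m k : ℂ) * x ^ k) (Metric.closedBall 0 R) ∧
    DifferentiableOn ℂ (fun x : ℂ => ∑' k : ℕ, (m k : ℂ) * x ^ k) (Metric.ball 0 R) := by
  have hFn := master_F_nonneg hα hF0 hm hF
  have hmn : ∀ k, 0 ≤ m k := by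
    rintro (_ | k)
    · exact hm0.ge
    · rw [hm]
      exact div_nonneg (hFn k) (D_pos hα k.succ_ne_zero).le
  have hquad : ∀ k, 1 / 8 * ∑ p ∈ antidiagonal k, m p.1 * m p.2 ≤ m (k + 1) := by
    intro k
    have h1 := sum_antidiagonal_mul_self_le hm0 hF0 hmn hFn hF k
    have h2 : F k / 4 ≤ m (k + 1) := by
      rw [hm]
      exact div_le_div_of_nonneg_left (hFn k) (D_pos hα k.succ_ne_zero) (D_le_four α _)
    linarith
  have hpartial : ∀ n, ∀ r ∈ Set.Ioo 0 R,
      ∑ k ∈ range n, m k * r ^ k ≤ 1 / (1 / 8 * r) := by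
    intro n r hr
    have hs : Summable fun k => m k * r ^ k := by
      have := hconv r (by simpa [abs_of_pos hr.1] using hr.2)
      exact_mod_cast this
    exact (hs.sum_le_tsum _ fun k _ => mul_nonneg (hmn k) (pow_nonneg hr.1.le k)).trans
      (tsum_le_of_sum_antidiagonal_le (by norm_num) hr.1 hmn hquad hs)
  have hsum : Summable fun k : ℕ => m k * R ^ k := by
    refine summable_of_sum_range_le (c := 1 / (1 / 8 * R))
      (fun k => mul_nonneg (hmn k) (pow_nonneg hR.le k)) fun n => ?_
    have hl : Tendsto (fun r : ℝ => ∑ k ∈ range n, m k * r ^ k) (𝓝[<] R)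
        (𝓝 (∑ k ∈ range n, m k * R ^ k)) :=
      (Continuous.tendsto (by fun_prop) R).mono_left nhdsWithin_le_nhds
    have hr : Tendsto (fun r : ℝ => 1 / (1 / 8 * r)) (𝓝[<] R) (𝓝 (1 / (1 / 8 * R))) :=
      (ContinuousAt.div (by fun_prop) (by fun_prop) (by positivity)).tendsto.mono_left
        nhdsWithin_le_nhds
    exact le_of_tendsto_of_tendsto hl hr
      (eventually_of_mem (Ioo_mem_nhdsLT hR) (hpartial n))
  have hbound : ∀ (k : ℕ) (x : ℂ), ‖x‖ ≤ R → ‖(m k : ℂ) * x ^ k‖ ≤ m k * R ^ k := by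
    intro k x hx
    rw [norm_mul, norm_pow, Complex.norm_of_nonneg (hmn k)]
    exact mul_le_mul_of_nonneg_left (pow_le_pow_left₀ (norm_nonneg _) hx k) (hmn k)
  refine ⟨hsum, ?_, ?_⟩
  · exact continuousOn_tsum (fun k => by fun_prop) hsum
      fun k x hx => hbound k x (mem_closedBall_zero_iff.1 hx)
  · exact Complex.differentiableOn_tsum_of_summable_norm hsum (fun k => by fun_prop)
      Metric.isOpen_ball fun k x hx => hbound k x (mem_ball_zero_iff.1 hx).le
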